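/- For every N ≥ 1, all r, s, q ∈ ℂ and all u, v ∈ ℂ^N, one has Σ_{α,β ∈ BC_N⁺} c_α c_β ⟨α,β⟩ (α(u)β(v) − α(v)β(u))² = 4q(r + 8s + 2(N−2)q) · Σ_{1≤i<j≤N} (u_i v_j − u_j v_i)², where ⟨α,β⟩ = Σ_{i=1}^N α_i β_i is the standard bilinear pairing of the coordinate vectors of α and β, and the sum is over all ordered pairs (α,β) of covectors of BC_N⁺(r,s,q). -/

import Mathlib

open Finset

noncomputable section

/-- Evaluation of a covector `α` on a vector `x` in `ℂ^N`. -/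
def ev {N : ℕ} (α x : Fin N → ℂ) : ℂ := ∑ i, α i * x i

/-- `(α ∧ β)(a, b) = α(a)β(b) - α(b)β(a)`. -/
def wedge {N : ℕ} (α β a b : Fin N → ℂ) : ℂ :=
  ev α a * ev β b - ev α b * ev β a

/-- The standard covector `e^i` of `(ℂ^N)^*`. -/
def esgl (N : ℕ) (i : Fin N) : Fin N → ℂ := Pi.single i 1

/-- The weighted sum `Σ_{α ∈ BC_N⁺} c_α f(α)` over the configuration `BC_N⁺(r,s,q)`,
whose covectors are `e^i` (weight `r`), `2e^i` (weight `s`) and `e^i ± e^j`, `i < j`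
(weight `q`). -/
def bcSum (N : ℕ) (r s q : ℂ) (f : (Fin N → ℂ) → ℂ) : ℂ :=
  (∑ i, r * f (esgl N i)) + (∑ i, s * f ((2 : ℂ) • esgl N i)) +
    ∑ p ∈ Finset.univ.filter (fun p : Fin N × Fin N => p.1 < p.2),
      (q * f (esgl N p.1 + esgl N p.2) + q * f (esgl N p.1 - esgl N p.2))

/-
Since `⟨α,β⟩ (α ∧ β)²` is homogeneous of degree three in `α` and in `β`, the weights enter only
through `(r + 8s) Σ_{e^i} + q Σ_{e^i ± e^j}`. Put `ω = (· ∧ ·)(u, v)`, `ω_{ij} = ω(e^i, e^j)` and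
`L = Σ_{i<j} ω_{ij}²`. Axis–axis pairs contribute `0`, because orthogonality or `ω_{ii} = 0`
kills them, and each of the two mixed sums contributes `2L`. For `e^i ± e^j` against `e^k ± e^l`,
summing over all signs leaves only index pairs with a common index. The products of two different
entries of `ω` that remain sum to multiples of `Σ_{i<j<l} ω_{il} ω_{jl}`, and these cancel; the
squares are counted by the third index of a triple, which gives `8(N - 2)L`.
-/

lemma sum_sum_eq_sum_diag_add_two_nsmul_sum_lt {ι M : Type*} [LinearOrder ι] [AddCommMonoid M]
    (s : Finset ι) {f : ι → ι → M} (hf : ∀ i j, f i j = f j i) :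
    ∑ i ∈ s, ∑ j ∈ s, f i j = ∑ i ∈ s, f i i + 2 • ∑ i ∈ s, ∑ j ∈ s with i < j, f i j := by
  have split (i j : ι) : f i j = (if i = j then f i j else 0) +
      ((if i < j then f i j else 0) + if j < i then f j i else 0) := by
    rcases lt_trichotomy i j with h | rfl | h
    · simp [h, h.ne, h.not_gt]
    · simp
    · simp [h, h.ne', h.not_gt, hf i j]
  have diag : ∑ i ∈ s, ∑ j ∈ s, (if i = j then f i j else 0) = ∑ i ∈ s, f i i :=
    sum_congr rfl fun i hi => by simp [hi]
  have swap : ∑ i ∈ s, ∑ j ∈ s, (if j < i then f j i else 0) =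
      ∑ i ∈ s, ∑ j ∈ s, if i < j then f i j else 0 := sum_comm
  rw [sum_congr rfl fun i _ => sum_congr rfl fun j _ => split i j]
  simp only [sum_add_distrib, diag, swap, sum_filter, two_nsmul]

section OrderedSums

variable {ι M R : Type*} [Fintype ι] [LinearOrder ι] [AddCommMonoid M] [CommRing R]

lemma sum_filter_lt_eq_sum_sum (f : ι → ι → M) :
    ∑ p : ι × ι with p.1 < p.2, f p.1 p.2 = ∑ i, ∑ j with i < j, f i j := by
  simp only [sum_filter, Fintype.sum_prod_type]

lemma sum_sum_lt_comm (f : ι → ι → M) :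
    ∑ i, ∑ j with i < j, f i j = ∑ j, ∑ i with i < j, f i j :=
  sum_comm' (by simp)

lemma sum_sum_lt_ite_eq_left (i : ι) (f : ι → ι → M) :
    ∑ k, ∑ l with k < l, (if i = k then f k l else 0) = ∑ l with i < l, f i l := by
  rw [Fintype.sum_eq_single i fun k hk => by simp [hk.symm]]
  simp only [if_true]

lemma sum_sum_lt_ite_eq_right (i : ι) (f : ι → ι → M) :
    ∑ k, ∑ l with k < l, (if i = l then f k l else 0) = ∑ k with k < i, f k i := by
  rw [sum_sum_lt_comm, Fintype.sum_eq_single i fun l hl => by simp [hl.symm]]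
  simp only [if_true]

lemma sum_sum_lt_shared_index (i j : ι) (A B C D : ι → ι → R) :
    ∑ k, ∑ l with k < l, 4 * ((if i = k then A k l else 0) + 2 * (if i = l then B k l else 0) +
        2 * (if j = k then C k l else 0) + 2 * (if j = l then D k l else 0)) =
      4 * (∑ l with i < l, A i l + 2 * ∑ k with k < i, B k i +
        2 * ∑ l with j < l, C j l + 2 * ∑ k with k < j, D k j) := by
  simp only [← mul_sum, sum_add_distrib, sum_sum_lt_ite_eq_left, sum_sum_lt_ite_eq_right]

lemma sum_lt_sum_lt_left_eq_sum_chain (f : ι → ι → ι → M) :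
    ∑ b, ∑ c with b < c, ∑ a with a < b, f a b c =
      ∑ a, ∑ b with a < b, ∑ c with b < c, f a b c :=
  (sum_congr rfl fun _ _ => sum_comm).trans
    (sum_sum_lt_comm fun a b => ∑ c with b < c, f a b c).symm

lemma sum_lt_sum_between_eq_sum_chain (f : ι → ι → ι → M) :
    ∑ a, ∑ c with a < c, ∑ b with a < b ∧ b < c, f a b c =
      ∑ a, ∑ b with a < b, ∑ c with b < c, f a b c :=
  sum_congr rfl fun _ _ => sum_comm' (by grind)

lemma sum_common_min_of_symm {f : ι → ι → ι → M} (hf : ∀ a b c, f a b c = f a c b) :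
    ∑ a, ∑ b with a < b, ∑ c with a < c, f a b c =
      ∑ a, ∑ b with a < b, f a b b + 2 • ∑ a, ∑ b with a < b, ∑ c with b < c, f a b c := by
  simp only [sum_sum_eq_sum_diag_add_two_nsmul_sum_lt _ (hf _), sum_add_distrib, smul_sum,
    filter_filter]
  congr! 5 with a _ b hb
  grind

lemma sum_common_max_of_symm {f : ι → ι → ι → M} (hf : ∀ a b c, f a b c = f b a c) :
    ∑ a, ∑ c with a < c, ∑ b with b < c, f a b c =
      ∑ a, ∑ c with a < c, f a a c + 2 • ∑ a, ∑ b with a < b, ∑ c with b < c, f a b c := by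
  have chain : ∑ c, ∑ a with a < c, ∑ b with b < c ∧ a < b, f a b c =
      ∑ a, ∑ b with a < b, ∑ c with b < c, f a b c := by
    rw [← sum_sum_lt_comm]
    exact sum_congr rfl fun a _ => sum_comm' (by grind)
  rw [sum_sum_lt_comm]
  simp only [sum_sum_eq_sum_diag_add_two_nsmul_sum_lt _ fun a b => hf a b _, sum_add_distrib,
    ← smul_sum, filter_filter, chain, sum_sum_lt_comm fun a c => f a a c]

lemma card_lt_add_card_between_add_card_gt {a b : ι} (hab : a < b) :
    #{c | c < a} + #{c | a < c ∧ c < b} + #{c | b < c} + 2 = Fintype.card ι := by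
  have union : ({c | c < a} : Finset ι) ∪ ({c | a < c ∧ c < b} : Finset ι) ∪
      ({c | b < c} : Finset ι) = {a, b}ᶜ := by
    ext c
    simp only [mem_union, mem_filter_univ, mem_compl, mem_insert, mem_singleton]
    grind
  rw [← card_pair hab.ne, ← card_compl_add_card {a, b}, ← union,
    card_union_of_disjoint, card_union_of_disjoint]
  all_goals
    rw [disjoint_left]
    simp only [mem_union, mem_filter_univ]
    grind

/- Each pair `a < b` lies in `card ι - 2` triples, according to the position of the third
element. -/
lemma sum_chain_pairs (f : ι → ι → R) :
    ∑ a, ∑ b with a < b, ∑ c with b < c, (f a b + f a c + f b c) =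
      ((Fintype.card ι : R) - 2) * ∑ a, ∑ b with a < b, f a b := by
  have above : ∑ a, ∑ b with a < b, ∑ c with b < c, f a b =
      ∑ a, ∑ b with a < b, (#{c | b < c} : R) * f a b := by
    simp only [sum_const, nsmul_eq_mul]
  have between : ∑ a, ∑ b with a < b, ∑ c with b < c, f a c =
      ∑ a, ∑ b with a < b, (#{c | a < c ∧ c < b} : R) * f a b := by
    simp only [← nsmul_eq_mul, ← sum_const, sum_lt_sum_between_eq_sum_chain fun a _ b => f a b]
  have below : ∑ a, ∑ b with a < b, ∑ c with b < c, f b c =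
      ∑ a, ∑ b with a < b, (#{c | c < a} : R) * f a b := by
    simp only [← nsmul_eq_mul, ← sum_const, sum_lt_sum_lt_left_eq_sum_chain fun _ a b => f a b]
  simp only [sum_add_distrib, above, between, below]
  simp only [mul_sum, ← sum_add_distrib]
  refine sum_congr rfl fun a _ => sum_congr rfl fun b hb => ?_
  have count := congrArg (Nat.cast (R := R))
    (card_lt_add_card_between_add_card_gt (mem_filter_univ b |>.mp hb))
  push_cast at count
  linear_combination f a b * count

end OrderedSums

section Term

open LinearMap (BilinForm)

variable {ι R : Type*} [Fintype ι] [CommRing R]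

/-- The summand of `G^{(2)}`, with an arbitrary bilinear form `ω` in place of
`(α, β) ↦ (α ∧ β)(u, v)`. -/
def g2Term (ω : BilinForm R (ι → R)) (α β : ι → R) : R := (α ⬝ᵥ β) * ω α β ^ 2

lemma g2Term_comm {ω : BilinForm R (ι → R)} (hω : ω.IsAlt) (α β : ι → R) :
    g2Term ω α β = g2Term ω β α := by
  rw [g2Term, g2Term, dotProduct_comm, ← hω.neg_eq, neg_sq]

lemma g2Term_smul_left (ω : BilinForm R (ι → R)) (c : R) (α β : ι → R) :
    g2Term ω (c • α) β = c ^ 3 * g2Term ω α β := by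
  simp only [g2Term, smul_dotProduct, map_smul, LinearMap.smul_apply, smul_eq_mul]
  ring

lemma g2Term_smul_right (ω : BilinForm R (ι → R)) (c : R) (α β : ι → R) :
    g2Term ω α (c • β) = c ^ 3 * g2Term ω α β := by
  simp only [g2Term, dotProduct_smul, map_smul, smul_eq_mul]
  ring

end Term

section AxisSum

open LinearMap (BilinForm)

variable {ι R : Type*} [Fintype ι] [DecidableEq ι] [CommRing R]

lemma toMatrix'_apply_self {ω : BilinForm R (ι → R)} (hω : ω.IsAlt) (i : ι) :
    ω.toMatrix' i i = 0 := by
  rw [LinearMap.BilinForm.toMatrix'_apply, hω.self_eq_zero]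

lemma toMatrix'_apply_swap {ω : BilinForm R (ι → R)} (hω : ω.IsAlt) (i j : ι) :
    ω.toMatrix' i j = -ω.toMatrix' j i := by
  simp only [LinearMap.BilinForm.toMatrix'_apply, hω.neg_eq]

lemma sum_signs_g2Term (ω : BilinForm R (ι → R)) (i j k l : ι) :
    g2Term ω (Pi.single i 1 + Pi.single j 1) (Pi.single k 1 + Pi.single l 1) +
      g2Term ω (Pi.single i 1 + Pi.single j 1) (Pi.single k 1 - Pi.single l 1) +
      (g2Term ω (Pi.single i 1 - Pi.single j 1) (Pi.single k 1 + Pi.single l 1) +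
        g2Term ω (Pi.single i 1 - Pi.single j 1) (Pi.single k 1 - Pi.single l 1)) =
      4 * ((if i = k then ω.toMatrix' i k ^ 2 + ω.toMatrix' i l ^ 2 +
          ω.toMatrix' j k ^ 2 + ω.toMatrix' j l ^ 2 else 0) +
        2 * (if i = l then ω.toMatrix' i k * ω.toMatrix' i l +
          ω.toMatrix' j k * ω.toMatrix' j l else 0) +
        2 * (if j = k then ω.toMatrix' i k * ω.toMatrix' j k +
          ω.toMatrix' i l * ω.toMatrix' j l else 0) +
        2 * (if j = l then ω.toMatrix' i k * ω.toMatrix' j l +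
          ω.toMatrix' i l * ω.toMatrix' j k else 0)) := by
  simp only [g2Term, add_dotProduct, sub_dotProduct, dotProduct_add, dotProduct_sub,
    single_one_dotProduct, Pi.single_apply, map_add, map_sub, LinearMap.add_apply,
    LinearMap.sub_apply, LinearMap.BilinForm.toMatrix'_apply, ← mul_boole (_ = _) (_ + _)]
  ring

/-- The sum of `f` over the covectors `e^i`. -/
def axisSum (f : (ι → R) → R) : R := ∑ i, f (Pi.single i 1)

lemma axisSum_linear_comb (a b : R) (f g : (ι → R) → R) :
    axisSum (fun α => a * f α + b * g α) = a * axisSum f + b * axisSum g := by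
  simp only [axisSum, sum_add_distrib, mul_sum]

lemma axisSum_g2Term (ω : BilinForm R (ι → R)) (α : ι → R) :
    axisSum (g2Term ω α) = ∑ i, α i * ω α (Pi.single i 1) ^ 2 := by
  simp only [axisSum, g2Term, dotProduct_single_one]

lemma axisSum_axisSum_g2Term {ω : BilinForm R (ι → R)} (hω : ω.IsAlt) :
    axisSum (fun α => axisSum (g2Term ω α)) = 0 := by
  simp only [axisSum_g2Term]
  simp [axisSum, Pi.single_apply, hω.self_eq_zero]

lemma axisSum_g2Term_add_axisSum_g2Term_sub {ω : BilinForm R (ι → R)} (hω : ω.IsAlt) (i j : ι) :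
    axisSum (g2Term ω (Pi.single i 1 + Pi.single j 1)) +
      axisSum (g2Term ω (Pi.single i 1 - Pi.single j 1)) = 2 * ω.toMatrix' i j ^ 2 := by
  simp only [axisSum_g2Term, Pi.add_apply, Pi.sub_apply, Pi.single_apply, add_mul, sub_mul,
    ite_mul, one_mul, zero_mul, sum_add_distrib, sum_sub_distrib, sum_ite_eq', mem_univ, if_true,
    LinearMap.map_add₂, LinearMap.map_sub₂, ← LinearMap.BilinForm.toMatrix'_apply,
    toMatrix'_apply_self hω, toMatrix'_apply_swap hω j i]
  ring

end AxisSum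

section PairSum

open LinearMap (BilinForm)

variable {ι R : Type*} [Fintype ι] [LinearOrder ι] [CommRing R]

/-- The sum of `f` over the covectors `e^i ± e^j` with `i < j`. -/
def pairSum (f : (ι → R) → R) : R :=
  ∑ p : ι × ι with p.1 < p.2,
    (f (Pi.single p.1 1 + Pi.single p.2 1) + f (Pi.single p.1 1 - Pi.single p.2 1))

lemma pairSum_eq_sum_sum (f : (ι → R) → R) :
    pairSum f = ∑ i, ∑ j with i < j,
      (f (Pi.single i 1 + Pi.single j 1) + f (Pi.single i 1 - Pi.single j 1)) := by
  rw [pairSum, ← sum_filter_lt_eq_sum_sum]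

lemma pairSum_linear_comb (a b : R) (f g : (ι → R) → R) :
    pairSum (fun α => a * f α + b * g α) = a * pairSum f + b * pairSum g := by
  simp only [pairSum, mul_sum, ← sum_add_distrib]
  exact sum_congr rfl fun p _ => by ring

lemma axisSum_pairSum_comm (F : (ι → R) → (ι → R) → R) :
    axisSum (fun α => pairSum fun β => F α β) = pairSum fun β => axisSum fun α => F α β := by
  simp only [axisSum, pairSum, ← sum_add_distrib]
  exact sum_comm

lemma pairSum_axisSum_g2Term {ω : BilinForm R (ι → R)} (hω : ω.IsAlt) :
    pairSum (fun α => axisSum (g2Term ω α)) =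
      2 * ∑ p : ι × ι with p.1 < p.2, ω.toMatrix' p.1 p.2 ^ 2 := by
  simp only [pairSum, axisSum_g2Term_add_axisSum_g2Term_sub hω, mul_sum]

lemma axisSum_pairSum_g2Term {ω : BilinForm R (ι → R)} (hω : ω.IsAlt) :
    axisSum (fun α => pairSum (g2Term ω α)) =
      2 * ∑ p : ι × ι with p.1 < p.2, ω.toMatrix' p.1 p.2 ^ 2 := by
  rw [axisSum_pairSum_comm, ← pairSum_axisSum_g2Term hω]
  simp only [g2Term_comm hω]

lemma pairSum_g2Term_add_pairSum_g2Term_sub {ω : BilinForm R (ι → R)} (hω : ω.IsAlt) (i j : ι) :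
    pairSum (g2Term ω (Pi.single i 1 + Pi.single j 1)) +
      pairSum (g2Term ω (Pi.single i 1 - Pi.single j 1)) =
      4 * (∑ l with i < l,
          (ω.toMatrix' i j ^ 2 + ω.toMatrix' i l ^ 2 + ω.toMatrix' j l ^ 2) +
        2 * ∑ k with k < i, ω.toMatrix' k j * ω.toMatrix' i j +
        2 * ∑ l with j < l, ω.toMatrix' i l * ω.toMatrix' j l -
        2 * ∑ k with k < j, ω.toMatrix' i j * ω.toMatrix' k j) := by
  have common_first : ∑ l with i < l, (ω.toMatrix' i i ^ 2 + ω.toMatrix' i l ^ 2 +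
        ω.toMatrix' j i ^ 2 + ω.toMatrix' j l ^ 2) =
      ∑ l with i < l, (ω.toMatrix' i j ^ 2 + ω.toMatrix' i l ^ 2 + ω.toMatrix' j l ^ 2) :=
    sum_congr rfl fun l _ => by
      rw [toMatrix'_apply_self hω, toMatrix'_apply_swap hω j i]
      ring
  have first_eq_second : ∑ k with k < i, (ω.toMatrix' i k * ω.toMatrix' i i +
        ω.toMatrix' j k * ω.toMatrix' j i) =
      ∑ k with k < i, ω.toMatrix' k j * ω.toMatrix' i j :=
    sum_congr rfl fun k _ => by
      rw [toMatrix'_apply_self hω, toMatrix'_apply_swap hω j k, toMatrix'_apply_swap hω j i]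
      ring
  have second_eq_first : ∑ l with j < l, (ω.toMatrix' i j * ω.toMatrix' j j +
        ω.toMatrix' i l * ω.toMatrix' j l) =
      ∑ l with j < l, ω.toMatrix' i l * ω.toMatrix' j l :=
    sum_congr rfl fun l _ => by
      rw [toMatrix'_apply_self hω]
      ring
  have common_second : ∑ k with k < j, (ω.toMatrix' i k * ω.toMatrix' j j +
        ω.toMatrix' i j * ω.toMatrix' j k) =
      -∑ k with k < j, ω.toMatrix' i j * ω.toMatrix' k j := by
    rw [← sum_neg_distrib]
    refine sum_congr rfl fun k _ => ?_
    rw [toMatrix'_apply_self hω, toMatrix'_apply_swap hω j k]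
    ring
  simp only [pairSum_eq_sum_sum, ← sum_add_distrib, sum_signs_g2Term]
  rw [sum_sum_lt_shared_index, common_first, first_eq_second, second_eq_first, common_second]
  ring

lemma pairSum_pairSum_g2Term {ω : BilinForm R (ι → R)} (hω : ω.IsAlt) :
    pairSum (fun α => pairSum (g2Term ω α)) =
      8 * ((Fintype.card ι : R) - 2) * ∑ p : ι × ι with p.1 < p.2, ω.toMatrix' p.1 p.2 ^ 2 := by
  have common_min := sum_common_min_of_symm
    (f := fun i j l => ω.toMatrix' i j ^ 2 + ω.toMatrix' i l ^ 2 + ω.toMatrix' j l ^ 2)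
    fun i j l => by rw [toMatrix'_apply_swap hω j l]; ring
  have chain := sum_lt_sum_lt_left_eq_sum_chain
    fun i j l => ω.toMatrix' i l * ω.toMatrix' j l
  have common_max := sum_common_max_of_symm
    (f := fun i j l => ω.toMatrix' i l * ω.toMatrix' j l) fun i j l => mul_comm _ _
  rw [sum_chain_pairs fun i j => ω.toMatrix' i j ^ 2] at common_min
  rw [pairSum_eq_sum_sum, sum_filter_lt_eq_sum_sum fun i j => ω.toMatrix' i j ^ 2]
  have sum_split (A B C D : ι → ι → R) :
      ∑ i, ∑ j with i < j, 4 * (A i j + 2 * B i j + 2 * C i j - 2 * D i j) =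
        4 * (∑ i, ∑ j with i < j, A i j + 2 * ∑ i, ∑ j with i < j, B i j +
          2 * ∑ i, ∑ j with i < j, C i j - 2 * ∑ i, ∑ j with i < j, D i j) := by
    simp only [← mul_sum, sum_add_distrib, sum_sub_distrib]
  simp only [pairSum_g2Term_add_pairSum_g2Term_sub hω]
  rw [sum_split, common_min, chain, common_max]
  simp only [toMatrix'_apply_self hω, sum_add_distrib, nsmul_eq_mul, ← sq, zero_pow two_ne_zero,
    sum_const_zero]
  push_cast
  ring

/-- The weighted sum of `f` over `BC⁺(r,s,q)`, for coordinates in any commutative ring `R` and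
indexed by any finite linear order `ι`. -/
def bcPlusSum (r s q : R) (f : (ι → R) → R) : R :=
  r * axisSum f + s * axisSum (fun α => f ((2 : R) • α)) + q * pairSum f

lemma bcPlusSum_const_mul (r s q c : R) (f : (ι → R) → R) :
    bcPlusSum r s q (fun α => c * f α) = c * bcPlusSum r s q f := by
  simp only [bcPlusSum, axisSum, pairSum, ← mul_add, ← mul_sum]
  ring

lemma bcPlusSum_of_cubic (r s q : R) {f : (ι → R) → R}
    (hf : ∀ (c : R) α, f (c • α) = c ^ 3 * f α) :
    bcPlusSum r s q f = (r + 8 * s) * axisSum f + q * pairSum f := by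
  simp only [bcPlusSum, hf, axisSum, ← mul_sum]
  ring

theorem BC_G2_identity_general {ω : BilinForm R (ι → R)} (hω : ω.IsAlt) (r s q : R) :
    bcPlusSum r s q (fun α => bcPlusSum r s q fun β => (α ⬝ᵥ β) * ω α β ^ 2) =
      4 * q * (r + 8 * s + 2 * ((Fintype.card ι : R) - 2) * q) *
        ∑ p : ι × ι with p.1 < p.2, ω (Pi.single p.1 1) (Pi.single p.2 1) ^ 2 := by
  change bcPlusSum r s q (fun α => bcPlusSum r s q (g2Term ω α)) = _
  have inner_sum_cubic (c : R) (α : ι → R) : bcPlusSum r s q (g2Term ω (c • α)) =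
      c ^ 3 * bcPlusSum r s q (g2Term ω α) := by
    simp only [← bcPlusSum_const_mul, ← g2Term_smul_left]
  rw [bcPlusSum_of_cubic r s q inner_sum_cubic]
  simp only [bcPlusSum_of_cubic r s q fun c β => g2Term_smul_right ω c _ β, axisSum_linear_comb,
    pairSum_linear_comb, axisSum_axisSum_g2Term hω, axisSum_pairSum_g2Term hω,
    pairSum_axisSum_g2Term hω, pairSum_pairSum_g2Term hω,
    LinearMap.BilinForm.toMatrix'_apply]
  ring

end PairSum

section WedgeForm

open LinearMap (BilinForm)

variable {N : ℕ}

/-- The form `(α, β) ↦ (α ∧ β)(u, v)` on covectors, bundled as a bilinear form. -/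
def wedgeForm (u v : Fin N → ℂ) : BilinForm ℂ (Fin N → ℂ) :=
  LinearMap.BilinForm.linMulLin (Fintype.linearCombination ℂ u) (Fintype.linearCombination ℂ v) -
    LinearMap.BilinForm.linMulLin (Fintype.linearCombination ℂ v) (Fintype.linearCombination ℂ u)

lemma wedgeForm_apply (u v α β : Fin N → ℂ) : wedgeForm u v α β = wedge α β u v := rfl

lemma wedgeForm_single (u v : Fin N → ℂ) (i j : Fin N) :
    wedgeForm u v (Pi.single i 1) (Pi.single j 1) = u i * v j - u j * v i := by
  simp [wedgeForm, mul_comm]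

lemma wedgeForm_isAlt (u v : Fin N → ℂ) : (wedgeForm u v).IsAlt := fun α => by
  simp [wedgeForm, mul_comm]

lemma bcSum_eq_bcPlusSum (r s q : ℂ) : bcSum N r s q = bcPlusSum r s q := by
  ext f
  simp only [bcSum, bcPlusSum, axisSum, pairSum, esgl, mul_sum, mul_add]

end WedgeForm

/-- the form `G^{(2)}`-type sum of the configuration `BC_N⁺(r,s,q)`,
with the standard pairing `⟨α,β⟩ = Σ αᵢβᵢ` inserted, equals
`4q(r + 8s + 2(N-2)q) Σ_{i<j} (e^i ∧ e^j)²`. -/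
theorem BC_G2_identity (N : ℕ) (hN : 1 ≤ N) (r s q : ℂ) (u v : Fin N → ℂ) :
    bcSum N r s q (fun α => bcSum N r s q
      (fun β => (∑ i, α i * β i) * wedge α β u v ^ 2)) =
    4 * q * (r + 8 * s + 2 * ((N : ℂ) - 2) * q) *
      ∑ p ∈ Finset.univ.filter (fun p : Fin N × Fin N => p.1 < p.2),
        (u p.1 * v p.2 - u p.2 * v p.1) ^ 2 := by
  simpa only [bcSum_eq_bcPlusSum, ← wedgeForm_apply, wedgeForm_single, dotProduct, Fintype.card_fin]
    using BC_G2_identity_general (wedgeForm_isAlt u v) r s q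

end
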